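/- Let φ be a faithful state on M_n(ℂ). If (τ_m) is a sequence of non-ergodic elements of CP_φ converging (in norm, equivalently pointwise) to τ ∈ CP_φ, then τ is non-ergodic. In other words, the set of non-ergodic elements of CP_φ is closed, so the set of ergodic elements is open in CP_φ. -/

import Mathlib

/-!
Each non-ergodic map has an invariant projection other than `0` and `1`. Projections are bounded
in the C⋆-norm, so along a subsequence these invariant projections converge, and by finite
dimensionality the limit is a projection invariant under the limit map. The limit is again
different from `0` and `1`: a nonzero projection has norm at least `1`, which applies both to
the projections and to their complements.
-/

open Matrix ComplexOrder

/-- The algebra of `n × n` complex matrices. -/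
abbrev Mat (n : ℕ) := Matrix (Fin n) (Fin n) ℂ

/-- A linear map between matrix algebras is completely positive if, for every `k`,
applying it blockwise to a positive semidefinite `k × k` block matrix yields a
positive semidefinite block matrix (i.e. `τ ⊗ id_k` is positive for all `k`). -/
def IsCPmap {m n : ℕ} (T : Mat m →ₗ[ℂ] Mat n) : Prop :=
  ∀ k : ℕ, ∀ A : Matrix (Fin k × Fin m) (Fin k × Fin m) ℂ, A.PosSemidef →
    (Matrix.of fun p q : Fin k × Fin n =>
      T (Matrix.of fun a b => A (p.1, a) (q.1, b)) p.2 q.2).PosSemidef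

/-- A state on a (finite-dimensional) matrix algebra: a positive unital linear functional. -/
def IsStateOn {I : Type} [Fintype I] [DecidableEq I]
    (φ : Matrix I I ℂ →ₗ[ℂ] ℂ) : Prop :=
  φ 1 = 1 ∧ ∀ x : Matrix I I ℂ, x.PosSemidef → 0 ≤ (φ x).re ∧ (φ x).im = 0

/-- A faithful functional: `φ(x* x) = 0` implies `x = 0`. -/
def IsFaithful {n : ℕ} (φ : Mat n →ₗ[ℂ] ℂ) : Prop :=
  ∀ x : Mat n, φ (xᴴ * x) = 0 → x = 0

/-- Membership in `CP_φ`: unital completely positive `φ`-preserving maps. -/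
def MemCPphi {n : ℕ} (φ : Mat n →ₗ[ℂ] ℂ) (τ : Mat n →ₗ[ℂ] Mat n) : Prop :=
  IsCPmap τ ∧ τ 1 = 1 ∧ ∀ x : Mat n, φ (τ x) = φ x

/-- Membership in the convex set of unital completely positive maps. -/
def MemUCP {n : ℕ} (τ : Mat n →ₗ[ℂ] Mat n) : Prop :=
  IsCPmap τ ∧ τ 1 = 1

/-- An orthogonal projection in `M_n(ℂ)`. -/
def IsProjn {n : ℕ} (E : Mat n) : Prop := E.IsHermitian ∧ E * E = E

/-- Ergodicity: the only invariant orthogonal projections are `0` and `1`. -/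
def IsErgodic {n : ℕ} (τ : Mat n →ₗ[ℂ] Mat n) : Prop :=
  ∀ E : Mat n, IsProjn E → τ E = E → E = 0 ∨ E = 1

/-- The normalized trace `x ↦ tr(x)/n`, as a linear functional on `M_n(ℂ)`. -/
noncomputable def trφ (n : ℕ) : Mat n →ₗ[ℂ] ℂ :=
  ((n : ℂ)⁻¹) • Matrix.traceLinearMap (Fin n) ℂ ℂ

/-- The completely positive map `x ↦ ∑ k, v k * x * (v k)ᴴ` given by a Kraus family. -/
noncomputable def krausMap {n d : ℕ} (v : Fin d → Mat n) : Mat n →ₗ[ℂ] Mat n where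
  toFun x := ∑ k, v k * x * (v k)ᴴ
  map_add' x y := by simp [Matrix.mul_add, Matrix.add_mul, Finset.sum_add_distrib]
  map_smul' c x := by simp [Matrix.mul_smul, Matrix.smul_mul, Finset.smul_sum]

/-- Entrywise complex conjugation of a matrix. -/
def mconj {n : ℕ} (x : Mat n) : Mat n := x.map (starRingEnd ℂ)

/-- `τ` is an extreme point of the convex set `{σ | P σ}` of maps on `M_n(ℂ)`. -/
def IsExtremeIn {n : ℕ} (P : (Mat n →ₗ[ℂ] Mat n) → Prop)
    (τ : Mat n →ₗ[ℂ] Mat n) : Prop :=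
  P τ ∧ ∀ τ₀ τ₁ : Mat n →ₗ[ℂ] Mat n, P τ₀ → P τ₁ →
    ∀ l : ℝ, 0 < l → l < 1 → τ = (l : ℂ) • τ₁ + ((1 - l : ℝ) : ℂ) • τ₀ →
      τ₀ = τ ∧ τ₁ = τ

/-- Complete positivity of a map defined on an operator system `S ⊆ M_m(ℂ)`:
every positive semidefinite block matrix with entries in `S` is mapped blockwise to a
positive semidefinite block matrix. -/
def IsCPon {m n : ℕ} (S : Submodule ℂ (Mat m)) (τ : S →ₗ[ℂ] Mat n) : Prop :=
  ∀ k : ℕ, ∀ B : Matrix (Fin k) (Fin k) S,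
    (Matrix.of fun p q : Fin k × Fin m => ((B p.1 q.1 : Mat m)) p.2 q.2).PosSemidef →
    (Matrix.of fun p q : Fin k × Fin n => (τ (B p.1 q.1)) p.2 q.2).PosSemidef

open scoped Matrix.Norms.L2Operator in
theorem isProjn_norm_le_one {n : ℕ} {E : Mat n} (hE : IsProjn E) : ‖E‖ ≤ 1 := by
  have h : ‖E‖ = ‖E‖ * ‖E‖ := by
    have h1 := CStarRing.norm_star_mul_self (x := E)
    have h2 : star E = E := hE.1
    rwa [h2, hE.2] at h1
  nlinarith [norm_nonneg E]

open scoped Matrix.Norms.L2Operator in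
theorem one_le_norm_of_isProjn {n : ℕ} {E : Mat n} (hE : IsProjn E) (h0 : E ≠ 0) :
    1 ≤ ‖E‖ := by
  have h : ‖E‖ ≤ ‖E‖ * ‖E‖ := by
    simpa only [hE.2] using norm_mul_le E E
  have hp : 0 < ‖E‖ := norm_pos_iff.mpr h0
  nlinarith

theorem isProjn_one_sub {n : ℕ} {E : Mat n} (hE : IsProjn E) : IsProjn (1 - E) := by
  refine ⟨Matrix.isHermitian_one.sub hE.1, ?_⟩
  simp [mul_sub, sub_mul, hE.2]

open scoped Matrix.Norms.L2Operator in
/-- The projections form a compact set, so every sequence of them has a subsequence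
converging to a projection. -/
theorem exists_subseq_isProjn {n : ℕ} (E : ℕ → Mat n) (hE : ∀ m, IsProjn (E m)) :
    ∃ P : Mat n, IsProjn P ∧ ∃ s : ℕ → ℕ, StrictMono s ∧
      Filter.Tendsto (fun m => E (s m)) Filter.atTop (nhds P) := by
  haveI : ProperSpace (Mat n) := FiniteDimensional.proper ℂ (Mat n)
  obtain ⟨P, -, s, hs, hlim⟩ := tendsto_subseq_of_bounded
    (Metric.isBounded_closedBall (x := (0 : Mat n)) (r := 1)) (x := E)
    (fun m => by simpa using isProjn_norm_le_one (hE m))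
  have hlim' : Filter.Tendsto (fun m => E (s m)) Filter.atTop (nhds P) := hlim
  refine ⟨P, ⟨?_, ?_⟩, s, hs, hlim'⟩
  · refine tendsto_nhds_unique (f := fun m => (E (s m))ᴴ) (hlim'.star) ?_
    exact hlim'.congr fun m => (hE (s m)).1.symm
  · refine tendsto_nhds_unique (hlim'.mul hlim') ?_
    exact hlim'.congr fun m => (hE (s m)).2.symm

open scoped Matrix.Norms.L2Operator in
/-- The zero projection is isolated among projections. -/
theorem ne_zero_of_tendsto_isProjn {n : ℕ} {E : ℕ → Mat n} {P : Mat n}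
    (hE : ∀ m, IsProjn (E m)) (h0 : ∀ m, E m ≠ 0)
    (h : Filter.Tendsto E Filter.atTop (nhds P)) : P ≠ 0 := by
  rintro rfl
  have h1 := ge_of_tendsto' h.norm fun m => one_le_norm_of_isProjn (hE m) (h0 m)
  rw [norm_zero] at h1
  linarith

theorem map_eq_sum_single {n : ℕ} (σ : Mat n →ₗ[ℂ] Mat n) (x : Mat n) :
    σ x = ∑ i, ∑ j, x i j • σ (Matrix.single i j 1) := by
  conv_lhs => rw [Matrix.matrix_eq_sum_single x]
  simp only [map_sum]
  refine Finset.sum_congr rfl fun i _ => Finset.sum_congr rfl fun j _ => ?_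
  rw [← map_smul, Matrix.smul_single, smul_eq_mul, mul_one]

/-- In finite dimension pointwise convergence of linear maps is joint: the arguments may
converge as well. -/
theorem tendsto_map_of_tendsto {n : ℕ} {σ : ℕ → (Mat n →ₗ[ℂ] Mat n)} {τ : Mat n →ₗ[ℂ] Mat n}
    (hσ : ∀ x : Mat n, Filter.Tendsto (fun m => σ m x) Filter.atTop (nhds (τ x)))
    {x : ℕ → Mat n} {y : Mat n} (hx : Filter.Tendsto x Filter.atTop (nhds y)) :
    Filter.Tendsto (fun m => σ m (x m)) Filter.atTop (nhds (τ y)) := by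
  rw [map_eq_sum_single τ y]
  simp_rw [fun m => map_eq_sum_single (σ m) (x m)]
  refine tendsto_finsetSum _ fun i _ => tendsto_finsetSum _ fun j _ => ?_
  exact ((tendsto_pi_nhds.mp (tendsto_pi_nhds.mp hx i)) j).smul (hσ _)

/-- a pointwise limit in `CP_φ` of a sequence of non-ergodic elements of
`CP_φ` is non-ergodic; hence the non-ergodic elements form a closed subset of `CP_φ` and
the ergodic ones an open subset. -/
theorem birkhoff_stmt2 {n : ℕ} (φ : Mat n →ₗ[ℂ] ℂ) (hφ : IsStateOn φ) (hφf : IsFaithful φ)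
    (τseq : ℕ → (Mat n →ₗ[ℂ] Mat n)) (τ : Mat n →ₗ[ℂ] Mat n)
    (hmem : ∀ m, MemCPphi φ (τseq m)) (hne : ∀ m, ¬ IsErgodic (τseq m))
    (hτ : MemCPphi φ τ)
    (hconv : ∀ x : Mat n,
      Filter.Tendsto (fun m => τseq m x) Filter.atTop (nhds (τ x))) :
    ¬ IsErgodic τ := by
  intro herg
  simp only [IsErgodic, not_forall, not_or] at hne
  choose E hE hinv h0 h1 using hne
  obtain ⟨P, hP, s, hs, hlim⟩ := exists_subseq_isProjn E hE
  have hPinv : τ P = P := by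
    refine tendsto_nhds_unique (tendsto_map_of_tendsto
      (fun x => (hconv x).comp hs.tendsto_atTop) hlim) ?_
    exact hlim.congr fun m => (hinv (s m)).symm
  have hP0 : P ≠ 0 := ne_zero_of_tendsto_isProjn (fun m => hE (s m)) (fun m => h0 (s m)) hlim
  have hP1 : 1 - P ≠ 0 := ne_zero_of_tendsto_isProjn (fun m => isProjn_one_sub (hE (s m)))
    (fun m => sub_ne_zero.mpr (Ne.symm (h1 (s m)))) (hlim.const_sub 1)
  rcases herg P hP hPinv with h | h
  · exact hP0 h
  · exact hP1 (sub_eq_zero.mpr h.symm)
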